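/- Let d ≥ 2, let Λ₀ = N·ℤ^{d-1} ⊂ ℝ^{d-1} be a Bravais lattice, and let H ⊂ ℝ^{d-1} be a finite set having the same symmetries as Λ₀. Fix t > 0 and any α > 0. Let b : {1,…,|H|} → H be a bijection and s_b its |H|-periodic extension. Then E^{f_α}(Λ_{s_b}) ≤ E^{f_α}(Λ_s) for every s : ℤ → H belonging to the class { s : ∃ k' ≤ |H|, ∃ b' : ℤ/k'ℤ → H, s(i) = b'(i mod k') }, i.e. among all layered configurations of period at most |H|. -/

import Mathlib

/-! The energy of a layering only sees, for each pair of layers, the Gaussian weight of their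
vertical distance and the theta value `θ(x) = ∑_{p ∈ Λ₀} exp(-πα|x + p|²)` at the difference `x` of
their shifts. Since `H` has the symmetries of `Λ₀`, `θ(x)` takes one value `B` at all differences of
distinct elements of `H` (`latticeTheta_eq_of_symm`), and `B ≤ θ(0)` (`latticeTheta_le_zero`).
In `s_b`, two layers share their shift exactly when their indices are congruent modulo `|H|`; in a
`k'`-periodic layering they do so at least whenever the indices are congruent modulo `k'`. As
`k' ≤ |H|` and the vertical Gaussian is decreasing, the excess
`(θ(0) - B) ∑_{j ∈ ℤ} exp(-πα t² (jn)²)` is no larger for `n = |H|` than for `n = k'`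
(`tsum_two_level_le`).

The inequality `θ(x) ≤ θ(0)` is proved without Poisson summation. By the parallelogram law, a product
`θ(x) θ(y)` is a sum over `c ∈ Λ₀ / 2Λ₀` of products of theta values with doubled parameter at
`(x ± y + c) / 2` (`latticeTheta_mul`). Cauchy-Schwarz applied to `θ(x)²` then yields
`θ(x)⁴ ≤ θ(2x) θ(0)³`, and since `θ` is bounded, taking suprema gives `θ ≤ θ(0)`. -/

open scoped BigOperators

/-! ### Gaussian sums over a lattice -/

/-- The Gaussian sum `∑_{p ∈ ℤⁿ} exp(-a |N (u + p)|²)`: the theta function of the lattice `N ℤⁿ`,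
with the translation `N u` recorded by its lattice coordinates `u`. -/
noncomputable def latticeTheta {n : ℕ} (N : Matrix (Fin n) (Fin n) ℝ) (a : ℝ) (u : Fin n → ℝ) : ℝ :=
  ∑' p : Fin n → ℤ, Real.exp (-a * ∑ i, (N.mulVec (u + fun j => (p j : ℝ)) i) ^ 2)

lemma summable_exp_neg_mul_int_sq {c : ℝ} (hc : 0 < c) :
    Summable fun m : ℤ => Real.exp (-c * (m : ℝ) ^ 2) := by
  have h := HurwitzKernelBounds.summable_f_int 0 0 (t := c / Real.pi) (by positivity)
  refine h.congr fun m => ?_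
  have : Real.pi ≠ 0 := Real.pi_ne_zero
  simp only [HurwitzKernelBounds.f_int, pow_zero, one_mul, add_zero]
  congr 1
  field_simp

lemma summable_prod_pi {g : ℤ → ℝ} (hg : Summable g) (hg0 : ∀ m, 0 ≤ g m) (n : ℕ) :
    Summable fun p : Fin n → ℤ => ∏ i, g (p i) := by
  induction n with
  | zero => exact Summable.of_finite
  | succ n ih =>
    rw [← (Fin.consEquiv fun _ : Fin (n + 1) => ℤ).summable_iff]
    refine (hg.mul_of_nonneg ih hg0 fun p => Finset.prod_nonneg fun i _ => hg0 _).congr fun x => ?_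
    simp [Fin.consEquiv, Fin.prod_univ_succ]

lemma summable_exp_neg_mul_sum_sq {c : ℝ} (hc : 0 < c) (n : ℕ) :
    Summable fun p : Fin n → ℤ => Real.exp (-c * ∑ i, (p i : ℝ) ^ 2) := by
  refine (summable_prod_pi (summable_exp_neg_mul_int_sq hc) (fun _ => (Real.exp_pos _).le) n).congr
    fun p => ?_
  rw [← Real.exp_sum, Finset.mul_sum]

lemma sum_mulVec_sq_le {n : ℕ} (M : Matrix (Fin n) (Fin n) ℝ) (x : Fin n → ℝ) :
    ∑ i, (M.mulVec x i) ^ 2 ≤ (∑ i, ∑ j, M i j ^ 2) * ∑ j, x j ^ 2 := by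
  rw [Finset.sum_mul]
  exact Finset.sum_le_sum fun i _ =>
    Finset.sum_mul_sq_le_sq_mul_sq Finset.univ (fun j => M i j) x

/-- The quadratic form `|N y|²` of an invertible matrix is bounded below by a positive multiple
of `|y|²`. -/
lemma exists_lower_bound {n : ℕ} {N : Matrix (Fin n) (Fin n) ℝ} (hN : IsUnit N.det) :
    ∃ δ : ℝ, 0 < δ ∧ ∀ y, δ * ∑ j, y j ^ 2 ≤ ∑ i, (N.mulVec y i) ^ 2 := by
  set K : ℝ := (∑ i, ∑ j, N⁻¹ i j ^ 2) with hK
  have hK0 : 0 ≤ K := by positivity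
  refine ⟨1 / (K + 1), by positivity, fun y => ?_⟩
  have h := sum_mulVec_sq_le N⁻¹ (N.mulVec y)
  rw [Matrix.mulVec_mulVec, Matrix.nonsing_inv_mul _ hN, Matrix.one_mulVec] at h
  have h0 : 0 ≤ ∑ i, (N.mulVec y i) ^ 2 := by positivity
  rw [one_div, inv_mul_le_iff₀ (by positivity)]
  nlinarith

/-- A summable majorant of the terms of `latticeTheta`, uniform for `u` in a bounded set. -/
lemma exists_majorant {n : ℕ} {N : Matrix (Fin n) (Fin n) ℝ} (hN : IsUnit N.det) {a : ℝ}
    (ha : 0 < a) (R : ℝ) :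
    ∃ g : (Fin n → ℤ) → ℝ, Summable g ∧ ∀ u : Fin n → ℝ, ∑ j, u j ^ 2 ≤ R → ∀ p,
      Real.exp (-a * ∑ i, (N.mulVec (u + fun j => (p j : ℝ)) i) ^ 2) ≤ g p := by
  obtain ⟨δ, hδ, h⟩ := exists_lower_bound hN
  refine ⟨fun p => Real.exp (a * δ * R) * Real.exp (-(a * δ / 2) * ∑ i, (p i : ℝ) ^ 2),
    (summable_exp_neg_mul_sum_sq (by positivity) n).mul_left _, fun u hu p => ?_⟩
  beta_reduce
  rw [← Real.exp_add, Real.exp_le_exp]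
  have h1 := h (u + fun j => (p j : ℝ))
  have h2 : (∑ i, (p i : ℝ) ^ 2) / 2 - ∑ j, u j ^ 2 ≤ ∑ j, ((u + fun j => (p j : ℝ)) j) ^ 2 := by
    rw [Finset.sum_div, ← Finset.sum_sub_distrib]
    refine Finset.sum_le_sum fun i _ => ?_
    simp only [Pi.add_apply]
    nlinarith [sq_nonneg (2 * u i + (p i : ℝ))]
  have h3 : δ * ((∑ i, (p i : ℝ) ^ 2) / 2 - R) ≤
      ∑ i, (N.mulVec (u + fun j => (p j : ℝ)) i) ^ 2 :=
    le_trans (mul_le_mul_of_nonneg_left (by linarith) hδ.le) h1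
  nlinarith [mul_le_mul_of_nonneg_left h3 ha.le]

lemma summable_latticeTheta {n : ℕ} {N : Matrix (Fin n) (Fin n) ℝ} (hN : IsUnit N.det) {a : ℝ}
    (ha : 0 < a) (u : Fin n → ℝ) :
    Summable fun p : Fin n → ℤ =>
      Real.exp (-a * ∑ i, (N.mulVec (u + fun j => (p j : ℝ)) i) ^ 2) := by
  obtain ⟨g, hg, h⟩ := exists_majorant hN ha (∑ j, u j ^ 2)
  exact Summable.of_nonneg_of_le (fun _ => (Real.exp_pos _).le) (h u le_rfl) hg

lemma latticeTheta_pos {n : ℕ} {N : Matrix (Fin n) (Fin n) ℝ} (hN : IsUnit N.det) {a : ℝ}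
    (ha : 0 < a) (u : Fin n → ℝ) : 0 < latticeTheta N a u :=
  (summable_latticeTheta hN ha u).tsum_pos (fun _ => (Real.exp_pos _).le) 0 (Real.exp_pos _)

lemma latticeTheta_fract {n : ℕ} (N : Matrix (Fin n) (Fin n) ℝ) (a : ℝ) (u : Fin n → ℝ) :
    latticeTheta N a u = latticeTheta N a fun j => Int.fract (u j) := by
  unfold latticeTheta
  rw [← (Equiv.subRight fun j => ⌊u j⌋).tsum_eq]
  refine tsum_congr fun p => ?_
  have : (u + fun j => (((Equiv.subRight fun j => ⌊u j⌋) p j : ℤ) : ℝ)) =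
      (fun j => Int.fract (u j)) + fun j => (p j : ℝ) := by
    ext j
    simp only [Pi.add_apply, Equiv.subRight_apply, Pi.sub_apply, Int.cast_sub,
      ← Int.self_sub_floor]
    ring
  rw [this]

lemma latticeTheta_bddAbove {n : ℕ} {N : Matrix (Fin n) (Fin n) ℝ} (hN : IsUnit N.det) {a : ℝ}
    (ha : 0 < a) : BddAbove (Set.range (latticeTheta N a)) := by
  obtain ⟨g, hg, h⟩ := exists_majorant hN ha (n : ℝ)
  refine ⟨∑' p, g p, ?_⟩
  rintro _ ⟨u, rfl⟩
  rw [latticeTheta_fract]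
  refine (summable_latticeTheta hN ha _).tsum_le_tsum (h _ ?_) hg
  calc ∑ j, Int.fract (u j) ^ 2 ≤ ∑ _j : Fin n, (1 : ℝ) := Finset.sum_le_sum fun j _ => by
        have h0 := Int.fract_nonneg (u j)
        have h1 := (Int.fract_lt_one (u j)).le
        nlinarith
    _ = n := by simp

/-- Pairs `(p, q)` of integer vectors, parametrized by the parity class `c` of `p + q` and the
quotients: `p + q = c + 2m` and `p - q = c + 2l`. -/
def parityEquiv (n : ℕ) :
    (Fin n → Fin 2) × ((Fin n → ℤ) × (Fin n → ℤ)) ≃ (Fin n → ℤ) × (Fin n → ℤ) where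
  toFun x := (fun j => ((x.1 j : ℕ) : ℤ) + x.2.1 j + x.2.2 j, fun j => x.2.1 j - x.2.2 j)
  invFun y := (fun j => ⟨((y.1 j + y.2 j) % 2).toNat, by omega⟩,
    (fun j => (y.1 j + y.2 j) / 2, fun j => (y.1 j + y.2 j) / 2 - y.2 j))
  left_inv := by
    rintro ⟨c, m, l⟩
    refine Prod.ext (funext fun j => Fin.ext ?_)
      (Prod.ext (funext fun j => ?_) (funext fun j => ?_)) <;> dsimp only <;>
      have := (c j).isLt <;> omega
  right_inv := by
    rintro ⟨p, q⟩
    refine Prod.ext (funext fun j => ?_) (funext fun j => ?_) <;> dsimp only <;> omega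

/-- Riemann's addition formula for two factors: the parallelogram law turns a product of two theta
values into a sum over the parity classes `ℤⁿ / 2ℤⁿ` of products at the doubled parameter. -/
lemma latticeTheta_mul {n : ℕ} {N : Matrix (Fin n) (Fin n) ℝ} (hN : IsUnit N.det) {a : ℝ}
    (ha : 0 < a) (x y : Fin n → ℝ) :
    latticeTheta N a x * latticeTheta N a y = ∑ c : Fin n → Fin 2,
      latticeTheta N (2 * a) (fun j => (x j + y j + ((c j : ℕ) : ℝ)) / 2) *
      latticeTheta N (2 * a) (fun j => (x j - y j + ((c j : ℕ) : ℝ)) / 2) := by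
  have h2a : 0 < 2 * a := by positivity
  have hsx := summable_latticeTheta hN ha x
  have hsy := summable_latticeTheta hN ha y
  have hpos : ∀ (b : ℝ) (u : Fin n → ℝ), (0 : (Fin n → ℤ) → ℝ) ≤ fun p : Fin n → ℤ =>
      Real.exp (-b * ∑ i, (N.mulVec (u + fun j => (p j : ℝ)) i) ^ 2) :=
    fun b u p => (Real.exp_pos _).le
  have hprod := hsx.mul_of_nonneg hsy (hpos a x) (hpos a y)
  have hprod' := ((parityEquiv n).summable_iff).2 hprod
  simp only [Function.comp_def] at hprod'
  unfold latticeTheta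
  rw [hsx.tsum_mul_tsum hsy hprod, ← (parityEquiv n).tsum_eq, hprod'.tsum_prod, tsum_fintype]
  refine Finset.sum_congr rfl fun c _ => ?_
  have hs1 := summable_latticeTheta hN h2a (fun j => (x j + y j + ((c j : ℕ) : ℝ)) / 2)
  have hs2 := summable_latticeTheta hN h2a (fun j => (x j - y j + ((c j : ℕ) : ℝ)) / 2)
  rw [hs1.tsum_mul_tsum hs2 (hs1.mul_of_nonneg hs2 (hpos _ _) (hpos _ _))]
  refine tsum_congr fun z => ?_
  obtain ⟨m, l⟩ := z
  rw [← Real.exp_add, ← Real.exp_add]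
  congr 1
  set U : Fin n → ℝ := (fun j => (x j + y j + ((c j : ℕ) : ℝ)) / 2) + fun j => (m j : ℝ) with hU
  set V : Fin n → ℝ := (fun j => (x j - y j + ((c j : ℕ) : ℝ)) / 2) + fun j => (l j : ℝ) with hV
  have e1 : (x + fun j => (((parityEquiv n (c, m, l)).1 j : ℤ) : ℝ)) = U + V := by
    ext j
    simp [parityEquiv, hU, hV]
    ring
  have e2 : (y + fun j => (((parityEquiv n (c, m, l)).2 j : ℤ) : ℝ)) = U - V := by
    ext j
    simp [parityEquiv, hU, hV]
    ring
  simp only [e1, e2, Matrix.mulVec_add, Matrix.mulVec_sub, Pi.add_apply, Pi.sub_apply,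
    Finset.mul_sum, ← Finset.sum_add_distrib]
  exact Finset.sum_congr rfl fun i _ => by ring

/-- Cauchy-Schwarz applied to the addition formula for `θ(u)²`; the two resulting sums of squares
are the addition formulas for `θ(2u) θ(0)` and `θ(0)²`. -/
lemma latticeTheta_pow_four_le {n : ℕ} {N : Matrix (Fin n) (Fin n) ℝ} (hN : IsUnit N.det) {a : ℝ}
    (ha : 0 < a) (u : Fin n → ℝ) :
    latticeTheta N a u ^ 4 ≤ latticeTheta N a (2 • u) * latticeTheta N a 0 ^ 3 := by
  have h1 := latticeTheta_mul hN ha u u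
  have h2 := latticeTheta_mul hN ha (2 • u) 0
  have h3 := latticeTheta_mul hN ha (0 : Fin n → ℝ) 0
  have hcs := Finset.sum_mul_sq_le_sq_mul_sq (Finset.univ : Finset (Fin n → Fin 2))
    (fun c => latticeTheta N (2 * a) (fun j => (u j + u j + ((c j : ℕ) : ℝ)) / 2))
    (fun c => latticeTheta N (2 * a) (fun j => (u j - u j + ((c j : ℕ) : ℝ)) / 2))
  rw [← h1] at hcs
  simp only [Pi.smul_apply, Pi.zero_apply, nsmul_eq_mul, Nat.cast_ofNat, add_zero, sub_zero,
    two_mul (u _), ← sq] at h2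
  simp only [Pi.zero_apply, add_zero, sub_zero, ← sq] at h3
  simp only [sub_self] at hcs
  rw [← h2, ← h3] at hcs
  calc latticeTheta N a u ^ 4 = (latticeTheta N a u * latticeTheta N a u) ^ 2 := by ring
    _ ≤ _ := hcs
    _ = _ := by
        rw [nsmul_eq_mul, Nat.cast_ofNat]
        ring

/-- A lattice Gaussian sum is largest at the lattice points. With `M` the supremum over all
translations, `latticeTheta_pow_four_le` gives `M⁴ ≤ M θ(0)³`, hence `M ≤ θ(0)`. -/
lemma latticeTheta_le_zero {n : ℕ} {N : Matrix (Fin n) (Fin n) ℝ} (hN : IsUnit N.det) {a : ℝ}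
    (ha : 0 < a) (u : Fin n → ℝ) : latticeTheta N a u ≤ latticeTheta N a 0 := by
  have hb := latticeTheta_bddAbove hN ha
  set M := ⨆ v, latticeTheta N a v with hM
  set A := latticeTheta N a 0 with hA
  have hA0 : 0 < A := latticeTheta_pos hN ha 0
  have hle : ∀ v, latticeTheta N a v ≤ M := le_ciSup hb
  have hM0 : 0 < M := hA0.trans_le (hle 0)
  have h1 : M ≤ √(√(M * A ^ 3)) := by
    refine ciSup_le fun v => Real.le_sqrt_of_sq_le (Real.le_sqrt_of_sq_le ?_)
    calc (latticeTheta N a v ^ 2) ^ 2 = latticeTheta N a v ^ 4 := by ring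
      _ ≤ _ := latticeTheta_pow_four_le hN ha v
      _ ≤ M * A ^ 3 := by gcongr; exact hle _
  have h2 : M ^ 4 ≤ M * A ^ 3 := by
    calc M ^ 4 ≤ √(√(M * A ^ 3)) ^ 4 := by gcongr
      _ = (√(√(M * A ^ 3)) ^ 2) ^ 2 := by ring
      _ = M * A ^ 3 := by rw [Real.sq_sqrt (by positivity), Real.sq_sqrt (by positivity)]
  have h3 : M ^ 3 ≤ A ^ 3 := le_of_mul_le_mul_left (by linarith [pow_succ' M 3]) hM0
  exact (hle u).trans (le_of_pow_le_pow_left₀ (by norm_num) hA0.le h3)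

/-! ### Layer interactions -/

lemma tsum_eq_latticeTheta {n : ℕ} {N : Matrix (Fin n) (Fin n) ℝ} (hN : IsUnit N.det) (a : ℝ)
    (x : Fin n → ℝ) :
    ∑' p : Fin n → ℤ, Real.exp (-a * ∑ i, (x i + N.mulVec (fun j => (p j : ℝ)) i) ^ 2)
      = latticeTheta N a (N⁻¹.mulVec x) := by
  unfold latticeTheta
  simp only [Matrix.mulVec_add, Matrix.mulVec_mulVec, Matrix.mul_nonsing_inv _ hN,
    Matrix.one_mulVec, Pi.add_apply]

/-- The symmetry hypothesis makes all interactions between distinct layers equal. -/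
lemma latticeTheta_eq_of_symm {n : ℕ} {N : Matrix (Fin n) (Fin n) ℝ} (hN : IsUnit N.det) (a : ℝ)
    (L0 : Set (Fin n → ℝ))
    (hL0 : L0 = {v | ∃ k : Fin n → ℤ, v = N.mulVec (fun i => (k i : ℝ))})
    (x y w z : Fin n → ℝ) (φ : L0 ≃ L0)
    (hφ : ∀ p : L0, ∑ i, ((p : Fin n → ℝ) i + x i - y i) ^ 2
          = ∑ i, ((φ p : Fin n → ℝ) i + w i - z i) ^ 2) :
    latticeTheta N a (N⁻¹.mulVec (x - y)) = latticeTheta N a (N⁻¹.mulVec (w - z)) := by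
  have hinj : Function.Injective fun k : Fin n → ℤ =>
      (⟨N.mulVec fun i => (k i : ℝ), by rw [hL0]; exact ⟨k, rfl⟩⟩ : L0) := by
    intro k l hkl
    have h := Matrix.mulVec_injective_of_isUnit ((Matrix.isUnit_iff_isUnit_det N).2 hN)
      (Subtype.ext_iff.1 hkl)
    exact funext fun i => by exact_mod_cast congrFun h i
  have hsurj : Function.Surjective fun k : Fin n → ℤ =>
      (⟨N.mulVec fun i => (k i : ℝ), by rw [hL0]; exact ⟨k, rfl⟩⟩ : L0) := by
    rintro ⟨v, hv⟩
    obtain ⟨k, rfl⟩ := hL0 ▸ hv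
    exact ⟨k, rfl⟩
  have key : ∀ x y : Fin n → ℝ, latticeTheta N a (N⁻¹.mulVec (x - y)) =
      ∑' p : L0, Real.exp (-a * ∑ i, ((p : Fin n → ℝ) i + x i - y i) ^ 2) := by
    intro x y
    rw [← tsum_eq_latticeTheta hN, ← (Equiv.ofBijective _ ⟨hinj, hsurj⟩).tsum_eq]
    refine tsum_congr fun p => ?_
    congr 2
    refine Finset.sum_congr rfl fun i _ => ?_
    change (x i - y i + N.mulVec (fun j => (p j : ℝ)) i) ^ 2 =
      (N.mulVec (fun j => (p j : ℝ)) i + x i - y i) ^ 2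
    ring
  rw [key, key, ← φ.tsum_eq fun p : L0 =>
    Real.exp (-a * ∑ i, ((p : Fin n → ℝ) i + w i - z i) ^ 2)]
  exact tsum_congr fun p => by rw [hφ]

/-- The sum `∑_{m ∈ ℤ, n ∣ m} exp(-c m²)` is antitone in the period `n`. -/
lemma tsum_dvd_antitone {c : ℝ} (hc : 0 < c) {k n : ℕ} (hk : 0 < k) (hkn : k ≤ n) :
    ∑' m : ℤ, (if (n : ℤ) ∣ m then Real.exp (-c * (m : ℝ) ^ 2) else 0) ≤
      ∑' m : ℤ, (if (k : ℤ) ∣ m then Real.exp (-c * (m : ℝ) ^ 2) else 0) := by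
  have hinj : ∀ n : ℕ, 0 < n → Function.Injective fun j : ℤ => (n : ℤ) * j :=
    fun n hn => mul_right_injective₀ (by positivity)
  have key : ∀ n : ℕ, 0 < n →
      ∑' m : ℤ, (if (n : ℤ) ∣ m then Real.exp (-c * (m : ℝ) ^ 2) else 0) =
        ∑' j : ℤ, Real.exp (-c * (((n : ℤ) * j : ℤ) : ℝ) ^ 2) := by
    intro n hn
    rw [← (hinj n hn).tsum_eq]
    · simp
    · intro m hm
      by_cases h : (n : ℤ) ∣ m
      · obtain ⟨j, rfl⟩ := h
        exact ⟨j, rfl⟩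
      · simp [h] at hm
  have hs : ∀ n : ℕ, 0 < n →
      Summable fun j : ℤ => Real.exp (-c * (((n : ℤ) * j : ℤ) : ℝ) ^ 2) :=
    fun n hn => (summable_exp_neg_mul_int_sq hc).comp_injective (hinj n hn)
  rw [key n (hk.trans_le hkn), key k hk]
  refine (hs n (hk.trans_le hkn)).tsum_le_tsum (fun j => ?_) (hs k hk)
  rw [Real.exp_le_exp]
  have h1 : ((k : ℝ)) ^ 2 ≤ (n : ℝ) ^ 2 := by gcongr
  push_cast
  nlinarith [mul_nonneg hc.le (mul_nonneg (sub_nonneg.2 h1) (sq_nonneg (j : ℝ)))]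

/-- A sequence that is `n`-periodic and injective on one period takes equal values exactly at
indices congruent modulo `n`. -/
lemma eq_iff_dvd_of_bij {β : Type*} {n : ℕ} (hn : 0 < n) {f : ℤ → β}
    (hper : ∀ k, f (k + n) = f k)
    (hinj : Function.Injective fun j : Fin n => f ((j : ℕ) : ℤ)) (h k : ℤ) :
    f h = f k ↔ (n : ℤ) ∣ h - k := by
  have hn0 : (n : ℤ) ≠ 0 := by positivity
  have hmod : ∀ k : ℤ, f k = f (k % n) := fun k => by
    have hp : Function.Periodic f (n : ℤ) := hper
    have := hp.int_mul (k / n) (k % n)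
    rwa [mul_comm, Int.cast_id, Int.emod_add_mul_ediv] at this
  have hlt : ∀ k : ℤ, (k % n).toNat < n := fun k => by
    have := Int.emod_lt_of_pos k (b := (n : ℤ)) (by positivity)
    have := Int.emod_nonneg k hn0
    omega
  have hcast : ∀ k : ℤ, (((k % n).toNat : ℕ) : ℤ) = k % n :=
    fun k => Int.toNat_of_nonneg (Int.emod_nonneg k hn0)
  rw [Int.dvd_iff_emod_eq_zero, ← Int.emod_eq_emod_iff_emod_sub_eq_zero]
  constructor
  · intro hf
    have heq := @hinj ⟨(h % n).toNat, hlt h⟩ ⟨(k % n).toNat, hlt k⟩ (by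
      simp only [hcast, ← hmod, hf])
    rw [← hcast h, ← hcast k, Fin.mk.inj heq]
  · intro hhk
    rw [hmod h, hmod k, hhk]

/-- With interaction `A` at offsets divisible by the period and a smaller interaction `B` at all
others, the longer period has the lower energy. -/
lemma tsum_two_level_le {c A B : ℝ} (hc : 0 < c) (hBA : B ≤ A) {k n : ℕ} (hk : 0 < k)
    (hkn : k ≤ n) :
    ∑' m : ℤ, Real.exp (-c * (m : ℝ) ^ 2) * (if (n : ℤ) ∣ m then A else B) ≤
      ∑' m : ℤ, Real.exp (-c * (m : ℝ) ^ 2) * (if (k : ℤ) ∣ m then A else B) := by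
  have hw := summable_exp_neg_mul_int_sq hc
  have key : ∀ n : ℕ,
      ∑' m : ℤ, Real.exp (-c * (m : ℝ) ^ 2) * (if (n : ℤ) ∣ m then A else B) =
        B * ∑' m : ℤ, Real.exp (-c * (m : ℝ) ^ 2) +
        (A - B) * ∑' m : ℤ, (if (n : ℤ) ∣ m then Real.exp (-c * (m : ℝ) ^ 2) else 0) := by
    intro n
    have hs : Summable fun m : ℤ => (if (n : ℤ) ∣ m then Real.exp (-c * (m : ℝ) ^ 2) else 0) := by
      refine hw.of_nonneg_of_le (fun m => ?_) (fun m => ?_) <;> split_ifs <;> simp [Real.exp_nonneg]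
    rw [← tsum_mul_left, ← tsum_mul_left, ← (hw.mul_left B).tsum_add (hs.mul_left (A - B))]
    refine tsum_congr fun m => ?_
    split_ifs <;> ring
  rw [key, key]
  have := mul_le_mul_of_nonneg_left (tsum_dvd_antitone hc hk hkn) (sub_nonneg.2 hBA)
  linarith

/-! ### Comparison of the energies -/

/-- For every `α > 0`, the bijective layering `s_b` minimizes the Gaussian energy
per point among all layered configurations of period `k' ≤ |H|`, i.e. among all
`s(i) = b'(i mod k')` with `b' : ℤ/k'ℤ → H`. -/
theorem layered_theta_minimal_small_period
    (d : ℕ) (hd : 2 ≤ d)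
    (N : Matrix (Fin (d - 1)) (Fin (d - 1)) ℝ) (hN : IsUnit N.det)
    (H : Finset (Fin (d - 1) → ℝ))
    (L0 : Set (Fin (d - 1) → ℝ))
    (hL0 : L0 = {v | ∃ k : Fin (d - 1) → ℤ, v = N.mulVec (fun i => (k i : ℝ))})
    -- `H` has the same symmetries as `Λ₀`
    (hsym : ∀ x ∈ H, ∀ y ∈ H, ∀ w ∈ H, ∀ z ∈ H, x ≠ y → w ≠ z →
      ∃ φ : L0 ≃ L0, ∀ p : L0,
        ∑ i, ((p : Fin (d - 1) → ℝ) i + x i - y i) ^ 2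
          = ∑ i, ((φ p : Fin (d - 1) → ℝ) i + w i - z i) ^ 2)
    (t α : ℝ) (ht : 0 < t) (hα : 0 < α)
    -- `sb` is the `|H|`-periodic extension of a bijection `b : {1,…,|H|} → H`
    (sb : ℤ → Fin (d - 1) → ℝ)
    (hsbH : ∀ k, sb k ∈ H)
    (hsb_per : ∀ k, sb (k + (H.card : ℤ)) = sb k)
    (hsb_bij : ∃ e : Fin H.card ≃ {x // x ∈ H},
      ∀ j : Fin H.card, sb ((j : ℕ) : ℤ) = (e j : Fin (d - 1) → ℝ))
    -- `s` is a layered configuration of period `k' ≤ |H|` given by `b' : ℤ/k'ℤ → H`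
    (s : ℤ → Fin (d - 1) → ℝ)
    (k' : ℕ) (hk'pos : 0 < k') (hk' : k' ≤ H.card)
    (b' : ZMod k' → {x // x ∈ H})
    (hs : ∀ i : ℤ, s i = (b' (i : ZMod k') : Fin (d - 1) → ℝ)) :
    (1 / (H.card : ℝ)) * ∑ h ∈ Finset.Icc (1 : ℤ) (H.card : ℤ), ∑' k : ℤ,
        ∑' p : Fin (d - 1) → ℤ,
          Real.exp (-Real.pi * α * (((h - k : ℤ) : ℝ) ^ 2 * t ^ 2
            + ∑ i, (sb h i - sb k i + N.mulVec (fun j => (p j : ℝ)) i) ^ 2))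
    ≤ (1 / (k' : ℝ)) * ∑ h ∈ Finset.Icc (1 : ℤ) (k' : ℤ), ∑' k : ℤ,
        ∑' p : Fin (d - 1) → ℤ,
          Real.exp (-Real.pi * α * (((h - k : ℤ) : ℝ) ^ 2 * t ^ 2
            + ∑ i, (s h i - s k i + N.mulVec (fun j => (p j : ℝ)) i) ^ 2)) := by
  have hn : 0 < H.card := hk'pos.trans_le hk'
  have ha : 0 < Real.pi * α := by positivity
  have hc : 0 < Real.pi * α * t ^ 2 := by positivity
  set θ : (Fin (d - 1) → ℝ) → ℝ := fun x => latticeTheta N (Real.pi * α) (N⁻¹.mulVec x) with hθ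
  have hθle : ∀ x, θ x ≤ θ 0 := fun x => by
    simpa only [hθ, Matrix.mulVec_zero] using latticeTheta_le_zero hN ha (N⁻¹.mulVec x)
  have hθ0 : ∀ x, 0 ≤ θ x := fun x => (latticeTheta_pos hN ha _).le
  -- `B` is the common interaction of distinct layers; any value `≤ θ 0` serves if `H` is a singleton.
  obtain ⟨B, hBle, hB⟩ : ∃ B, B ≤ θ 0 ∧ ∀ x ∈ H, ∀ y ∈ H, x ≠ y → θ (x - y) = B := by
    by_cases hex : ∃ w ∈ H, ∃ z ∈ H, w ≠ z
    · obtain ⟨w, hw, z, hz, hwz⟩ := hex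
      refine ⟨θ (w - z), hθle _, fun x hx y hy hxy => ?_⟩
      obtain ⟨φ, hφ⟩ := hsym x hx y hy w hw z hz hxy hwz
      exact latticeTheta_eq_of_symm hN _ L0 hL0 x y w z φ hφ
    · push Not at hex
      exact ⟨θ 0, le_rfl, fun x hx y hy hxy => absurd (hex x hx y hy) hxy⟩
  -- Summing over the offset `m = h - k` separates each layer interaction into a Gaussian weight
  -- in the stacking direction and a theta value.
  have hinner : ∀ (f : ℤ → Fin (d - 1) → ℝ) (h : ℤ),
      (∑' k : ℤ, ∑' p : Fin (d - 1) → ℤ,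
          Real.exp (-Real.pi * α * (((h - k : ℤ) : ℝ) ^ 2 * t ^ 2
            + ∑ i, (f h i - f k i + N.mulVec (fun j => (p j : ℝ)) i) ^ 2))) =
        ∑' m : ℤ, Real.exp (-(Real.pi * α * t ^ 2) * (m : ℝ) ^ 2) * θ (f h - f (h - m)) := by
    intro f h
    rw [← (Equiv.subLeft h).tsum_eq]
    refine tsum_congr fun m => ?_
    simp only [hθ]
    rw [← tsum_eq_latticeTheta hN, ← tsum_mul_left]
    refine tsum_congr fun p => ?_
    rw [← Real.exp_add, Equiv.subLeft_apply, sub_sub_cancel]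
    simp only [Pi.sub_apply]
    congr 1
    ring
  simp only [hinner]
  set E : ℝ := ∑' m : ℤ, Real.exp (-(Real.pi * α * t ^ 2) * (m : ℝ) ^ 2) *
    (if (H.card : ℤ) ∣ m then θ 0 else B) with hE
  have hsbE : ∀ h : ℤ, ∑' m : ℤ, Real.exp (-(Real.pi * α * t ^ 2) * (m : ℝ) ^ 2) *
      θ (sb h - sb (h - m)) = E := by
    intro h
    refine tsum_congr fun m => ?_
    obtain ⟨e, he⟩ := hsb_bij
    have hinj : Function.Injective fun j : Fin H.card => sb ((j : ℕ) : ℤ) := fun i j hij => by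
      simpa only [he, Subtype.coe_inj, e.injective.eq_iff] using hij
    have hiff := eq_iff_dvd_of_bij hn hsb_per hinj h (h - m)
    rw [sub_sub_cancel] at hiff
    split_ifs with hm
    · rw [hiff.2 hm, sub_self]
    · rw [hB _ (hsbH _) _ (hsbH _) fun h' => hm (hiff.1 h')]
  have hsE : ∀ h : ℤ, E ≤ ∑' m : ℤ, Real.exp (-(Real.pi * α * t ^ 2) * (m : ℝ) ^ 2) *
      θ (s h - s (h - m)) := by
    intro h
    have hw := summable_exp_neg_mul_int_sq hc
    have hsum : Summable fun m : ℤ => Real.exp (-(Real.pi * α * t ^ 2) * (m : ℝ) ^ 2) *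
        θ (s h - s (h - m)) :=
      (hw.mul_right (θ 0)).of_nonneg_of_le (fun m => mul_nonneg (Real.exp_nonneg _) (hθ0 _))
        fun m => mul_le_mul_of_nonneg_left (hθle _) (Real.exp_nonneg _)
    refine (tsum_two_level_le hc hBle hk'pos hk').trans (Summable.tsum_le_tsum (fun m => ?_) ?_ hsum)
    · refine mul_le_mul_of_nonneg_left ?_ (Real.exp_nonneg _)
      split_ifs with hm
      · have : s (h - m) = s h := by
          rw [hs, hs, Int.cast_sub, (ZMod.intCast_zmod_eq_zero_iff_dvd m k').2 hm, sub_zero]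
        rw [this, sub_self]
      · by_cases heq : s h = s (h - m)
        · rw [heq, sub_self]
          exact hBle
        · refine (hB _ ?_ _ ?_ heq).ge
          · rw [hs]; exact (b' _).2
          · rw [hs]; exact (b' _).2
    · refine Summable.of_norm_bounded (hw.mul_right (max |θ 0| |B|)) fun m => ?_
      rw [Real.norm_eq_abs, abs_mul, Real.abs_exp]
      refine mul_le_mul_of_nonneg_left ?_ (Real.exp_nonneg _)
      split_ifs <;> simp
  have hcardR : (0 : ℝ) < H.card := by exact_mod_cast hn
  have hkR : (0 : ℝ) < k' := by exact_mod_cast hk'pos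
  calc _ = E := by
        simp only [hsbE, Finset.sum_const, Int.card_Icc, nsmul_eq_mul]
        simp
        field_simp
    _ = 1 / (k' : ℝ) * ∑ h ∈ Finset.Icc (1 : ℤ) (k' : ℤ), E := by
        simp only [Finset.sum_const, Int.card_Icc, nsmul_eq_mul]
        simp
        field_simp
    _ ≤ _ := by
        gcongr
        exact hsE _
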